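/- Let a≥1 and b≥2 be integers and G=G(a,b). For all 1≤i<j≤b, the Lin–Lu–Yau curvature satisfies κ_LLY(v_i,v_j)=(2a+b)/(2a+b−1), which is strictly greater than 1. -/

import Mathlib

open scoped Classical
open Finset

noncomputable section

/-- The degree of a vertex `x` in the graph `G`. -/
def deg {V : Type*} [Fintype V] (G : SimpleGraph V) (x : V) : ℕ :=
  (Finset.univ.filter (fun y => G.Adj x y)).card

/-- The diameter of `G`: the maximum of the combinatorial distance over all pairs of vertices. -/
def diam {V : Type*} [Fintype V] (G : SimpleGraph V) : ℕ :=
  Finset.univ.sup (fun xy : V × V => G.dist xy.1 xy.2)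

/-- The probability measure `μ_x^p` of the lazy simple random walk at `x` with idleness `p`. -/
def mu {V : Type*} [Fintype V] (G : SimpleGraph V) (p : ℝ) (x : V) : V → ℝ :=
  fun z => if z = x then p else if G.Adj x z then (1 - p) / (deg G x : ℝ) else 0

/-- The Wasserstein distance `W₁(μ₁, μ₂)` with respect to the combinatorial distance of `G`:
the infimum of the total transport cost over all transport plans from `μ₁` to `μ₂`. -/
def W1 {V : Type*} [Fintype V] (G : SimpleGraph V) (μ₁ μ₂ : V → ℝ) : ℝ :=
  sInf {c : ℝ | ∃ π : V → V → ℝ,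
    (∀ x y, 0 ≤ π x y ∧ π x y ≤ 1) ∧
    (∀ x, ∑ y, π x y = μ₁ x) ∧
    (∀ y, ∑ x, π x y = μ₂ y) ∧
    c = ∑ x, ∑ y, (G.dist x y : ℝ) * π x y}

/-- The `p`-Ollivier-Ricci curvature `κ_p(x,y) = 1 - W₁(μ_x^p, μ_y^p)`. -/
def kappa {V : Type*} [Fintype V] (G : SimpleGraph V) (p : ℝ) (x y : V) : ℝ :=
  1 - W1 G (mu G p x) (mu G p y)

/-- The Lin-Lu-Yau curvature `κ_LLY(x,y) = lim_{p→1} κ_p(x,y)/(1-p)`. -/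
def kappaLLY {V : Type*} [Fintype V] (G : SimpleGraph V) (x y : V) : ℝ :=
  Filter.limUnder (nhdsWithin 1 (Set.Iio 1)) (fun p => kappa G p x y / (1 - p))

/-- `G` is Bonnet-Myers sharp if the infimum of `κ_LLY` over the edges equals `2/diam(G)`. -/
def BMSharp {V : Type*} [Fintype V] (G : SimpleGraph V) : Prop :=
  sInf {r : ℝ | ∃ x y, G.Adj x y ∧ r = kappaLLY G x y} = 2 / (diam G : ℝ)

/-- `G` is obtained from the complete graph on its vertex set by deleting a matching
(a set of pairwise disjoint edges, encoded as a symmetric irreflexive relation in which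
every vertex has at most one partner). -/
def IsMatchingDeletionOfComplete {V : Type*} (G : SimpleGraph V) : Prop :=
  ∃ M : V → V → Prop, Symmetric M ∧ (∀ x, ¬ M x x) ∧
    (∀ x y z, M x y → M x z → y = z) ∧
    (∀ x y, G.Adj x y ↔ x ≠ y ∧ ¬ M x y)

/-- The graph `G(a,b)` on `2a+b` vertices `u_1, …, u_{2a}, v_1, …, v_b` (encoded as
`Fin (2a+b)`, with `u_i` the index `i-1` and `v_j` the index `2a+j-1`), in which two distinct
vertices are adjacent unless they form a pair `{u_{2i-1}, u_{2i}}`, i.e. `G(a,b)` is the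
complete graph `K_{2a+b}` with a matching of size `a` deleted. -/
def Gab (a b : ℕ) : SimpleGraph (Fin (2*a+b)) where
  Adj x y := x ≠ y ∧ ¬((x : ℕ) < 2*a ∧ (y : ℕ) < 2*a ∧ (x : ℕ)/2 = (y : ℕ)/2)
  symm := by
    refine ⟨?_⟩
    intro x y h
    exact ⟨h.1.symm, fun hc => h.2 ⟨hc.2.1, hc.1, hc.2.2.symm⟩⟩
  loopless := by refine ⟨?_⟩; intro x h; exact h.1 rfl

/-- The antitree `AT(a_1, …, a_N)` on the disjoint union of sets `V_1, …, V_N` with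
`|V_k| = a_k` (0-indexed here: `V_k` is `Fin (a k)` for `k : Fin N`): two distinct vertices
are adjacent iff they lie in the same set or in consecutive sets. -/
def antitree (N : ℕ) (a : Fin N → ℕ) : SimpleGraph (Σ k : Fin N, Fin (a k)) where
  Adj x y := x ≠ y ∧
    ((x.1 : ℕ) = (y.1 : ℕ) ∨ (x.1 : ℕ) + 1 = (y.1 : ℕ) ∨ (y.1 : ℕ) + 1 = (x.1 : ℕ))
  symm := by
    refine ⟨?_⟩
    intro x y h
    refine ⟨h.1.symm, ?_⟩
    rcases h.2 with h2 | h2 | h2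
    · exact Or.inl h2.symm
    · exact Or.inr (Or.inr h2)
    · exact Or.inr (Or.inl h2)
  loopless := by refine ⟨?_⟩; intro x h; exact h.1 rfl

/-!
By weak Kantorovich duality, moving a mass `m` from `x` to `y` and leaving all other mass in place
is optimal, so `W₁(ν + m δ_x, ν + m δ_y) = d(x, y) m` for every `ν ≥ 0`. For a vertex `x` of
degree `d`, the measure `μ_x^p` is the constant `(1 - p)/d` on the closed neighbourhood `N[x]` plus
the mass `p - (1 - p)/d` at `x`. Two distinct vertices with the same closed neighbourhood are
adjacent and share the first part, hence `W₁ = p - (1 - p)/d` for `p` near `1` and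
`κ_LLY = (d + 1)/d`. In `G(a, b)` every `v_i` is adjacent to all other vertices, so all the `v_i`
have the same closed neighbourhood and `d = 2a + b - 1`.
-/

section Transport

variable {V : Type*} [Fintype V] {G : SimpleGraph V} {μ₁ μ₂ : V → ℝ} {π : V → V → ℝ}

/-- `π` is a transport plan from `μ₁` to `μ₂`, that is, one of the admissible couplings in the
definition of `W1`. -/
structure IsTransportPlan (μ₁ μ₂ : V → ℝ) (π : V → V → ℝ) : Prop where
  nonneg : ∀ z w, 0 ≤ π z w
  le_one : ∀ z w, π z w ≤ 1
  sum_row : ∀ z, ∑ w, π z w = μ₁ z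
  sum_col : ∀ w, ∑ z, π z w = μ₂ w

/-- The cost of `π` with respect to the graph distance, the quantity minimised by `W1`. -/
def transportCost (G : SimpleGraph V) (π : V → V → ℝ) : ℝ :=
  ∑ z, ∑ w, (G.dist z w : ℝ) * π z w

theorem W1_eq_sInf_transportCost (G : SimpleGraph V) (μ₁ μ₂ : V → ℝ) :
    W1 G μ₁ μ₂ = sInf (transportCost G '' {π | IsTransportPlan μ₁ μ₂ π}) := by
  unfold W1
  congr 1
  ext c
  constructor
  · rintro ⟨π, hπ, hrow, hcol, rfl⟩
    exact ⟨π, ⟨fun z w => (hπ z w).1, fun z w => (hπ z w).2, hrow, hcol⟩, rfl⟩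
  · rintro ⟨π, hπ, rfl⟩
    exact ⟨π, fun z w => ⟨hπ.nonneg z w, hπ.le_one z w⟩, hπ.sum_row, hπ.sum_col, rfl⟩

theorem IsTransportPlan.of_nonneg_of_le_one (hπ : ∀ z w, 0 ≤ π z w) (hμ₁ : μ₁ ≤ 1)
    (hrow : ∀ z, ∑ w, π z w = μ₁ z) (hcol : ∀ w, ∑ z, π z w = μ₂ w) :
    IsTransportPlan μ₁ μ₂ π where
  nonneg := hπ
  le_one z w :=
    calc π z w ≤ ∑ w', π z w' := single_le_sum (fun w' _ => hπ z w') (mem_univ w)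
      _ = μ₁ z := hrow z
      _ ≤ 1 := hμ₁ z
  sum_row := hrow
  sum_col := hcol

theorem IsTransportPlan.sum_mul_sub_le_transportCost (hπ : IsTransportPlan μ₁ μ₂ π) {f : V → ℝ}
    (hf : ∀ z w, f z - f w ≤ G.dist z w) :
    ∑ z, f z * (μ₁ z - μ₂ z) ≤ transportCost G π :=
  calc ∑ z, f z * (μ₁ z - μ₂ z)
      = ∑ z, f z * ∑ w, π z w - ∑ w, f w * ∑ z, π z w := by
        simp only [hπ.sum_row, hπ.sum_col, mul_sub, sum_sub_distrib]
    _ = ∑ z, ∑ w, (f z - f w) * π z w := by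
        simp only [mul_sum, sub_mul, sum_sub_distrib]
        rw [sum_comm (f := fun w z => f w * π z w)]
    _ ≤ transportCost G π :=
        sum_le_sum fun z _ => sum_le_sum fun w _ =>
          mul_le_mul_of_nonneg_right (hf z w) (hπ.nonneg z w)

theorem IsTransportPlan.W1_eq_transportCost (hπ : IsTransportPlan μ₁ μ₂ π) {f : V → ℝ}
    (hf : ∀ z w, f z - f w ≤ G.dist z w)
    (hopt : ∑ z, f z * (μ₁ z - μ₂ z) = transportCost G π) :
    W1 G μ₁ μ₂ = transportCost G π := by
  rw [W1_eq_sInf_transportCost]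
  refine IsLeast.csInf_eq ⟨⟨π, hπ, rfl⟩, ?_⟩
  rintro _ ⟨π', hπ', rfl⟩
  exact hopt.ge.trans (hπ'.sum_mul_sub_le_transportCost hf)

/-- The plan from `ν + m δ_x` to `ν + m δ_y` that moves the mass `m` from `x` to `y` and fixes
`ν`. -/
def moveMass (ν : V → ℝ) (m : ℝ) (x y : V) : V → V → ℝ :=
  fun z w => (if z = w then ν z else 0) + if z = x ∧ w = y then m else 0

theorem isTransportPlan_moveMass {ν : V → ℝ} {m : ℝ} {x : V} (hν : 0 ≤ ν) (hm : 0 ≤ m)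
    (hle : ν + Pi.single x m ≤ 1) (y : V) :
    IsTransportPlan (ν + Pi.single x m) (ν + Pi.single y m) (moveMass ν m x y) := by
  refine .of_nonneg_of_le_one (fun z w => ?_) hle (fun z => ?_) (fun w => ?_)
  · exact add_nonneg (ite_nonneg (hν z) le_rfl) (ite_nonneg hm le_rfl)
  · simp [moveMass, sum_add_distrib, ite_and, Pi.single_apply]
  · simp [moveMass, sum_add_distrib, ite_and, Pi.single_apply]

theorem transportCost_moveMass (G : SimpleGraph V) (ν : V → ℝ) (m : ℝ) (x y : V) :
    transportCost G (moveMass ν m x y) = G.dist x y * m := by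
  simp [transportCost, moveMass, mul_add, sum_add_distrib, ite_and]

theorem W1_add_single (hG : G.Connected) {ν : V → ℝ} {m : ℝ} {x : V} (hν : 0 ≤ ν) (hm : 0 ≤ m)
    (hle : ν + Pi.single x m ≤ 1) (y : V) :
    W1 G (ν + Pi.single x m) (ν + Pi.single y m) = G.dist x y * m := by
  have hlip (z w : V) : (G.dist z y : ℝ) - G.dist w y ≤ G.dist z w := by
    rw [sub_le_iff_le_add]
    exact_mod_cast hG.dist_triangle
  have hdual : ∑ z, (G.dist z y : ℝ) *
      ((ν + Pi.single x m : V → ℝ) z - (ν + Pi.single y m : V → ℝ) z) = G.dist x y * m := by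
    simp [mul_sub, sum_sub_distrib, Pi.single_apply]
  rw [← transportCost_moveMass G ν m x y] at hdual ⊢
  exact (isTransportPlan_moveMass hν hm hle y).W1_eq_transportCost hlip hdual

end Transport

section ClosedNeighbourhood

variable {V : Type*} {G : SimpleGraph V} {x y : V} {p : ℝ}

/-- The closed neighbourhood `N[x]`: the vertex `x` together with its neighbours. -/
def closedNbhd (G : SimpleGraph V) (x : V) : Set V :=
  insert x (G.neighborSet x)

theorem adj_of_closedNbhd_eq (hxy : x ≠ y) (h : closedNbhd G x = closedNbhd G y) : G.Adj x y :=
  (h ▸ Set.mem_insert y _ : y ∈ closedNbhd G x).resolve_left hxy.symm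

theorem closedNbhd_eq_univ (h : G.IsUniversal x) : closedNbhd G x = Set.univ :=
  SimpleGraph.insert_neighborSet_eq_univ.2 h

variable [Fintype V]

theorem ncard_closedNbhd (G : SimpleGraph V) (x : V) : (closedNbhd G x).ncard = deg G x + 1 := by
  rw [closedNbhd, Set.ncard_insert_of_notMem (by simp), deg, ← Set.ncard_coe_finset]
  simp [SimpleGraph.neighborSet]

theorem deg_eq_of_closedNbhd_eq (h : closedNbhd G x = closedNbhd G y) : deg G x = deg G y := by
  simpa only [ncard_closedNbhd, add_left_inj] using congrArg Set.ncard h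

theorem deg_add_one_of_isUniversal (h : G.IsUniversal x) : deg G x + 1 = Fintype.card V := by
  rw [← ncard_closedNbhd, closedNbhd_eq_univ h, Set.ncard_univ, Nat.card_eq_fintype_card]

theorem cast_deg_of_isUniversal (h : G.IsUniversal x) :
    (deg G x : ℝ) = (Fintype.card V : ℝ) - 1 :=
  eq_sub_of_add_eq (by exact_mod_cast deg_add_one_of_isUniversal h)

theorem deg_pos_of_adj (h : G.Adj x y) : 0 < deg G x :=
  card_pos.2 ⟨y, by simpa using h⟩

theorem mu_le_one (hp₀ : 0 ≤ p) (hp₁ : p ≤ 1) (x : V) : mu G p x ≤ 1 := by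
  intro z
  unfold mu
  split_ifs with hz hxz
  · exact hp₁
  · have hdeg : (1 : ℝ) ≤ deg G x := by exact_mod_cast deg_pos_of_adj hxz
    exact div_le_one_of_le₀ (by linarith) (by linarith)
  · exact zero_le_one' ℝ

theorem mu_eq_indicator_add_single (G : SimpleGraph V) (p : ℝ) (x : V) :
    mu G p x = (closedNbhd G x).indicator (fun _ => (1 - p) / deg G x)
      + Pi.single x (p - (1 - p) / deg G x) := by
  ext z
  by_cases hz : z = x <;> simp [mu, Set.indicator, closedNbhd, hz]

end ClosedNeighbourhood

section Curvature

open scoped Topology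

variable {V : Type*} [Fintype V] {G : SimpleGraph V} {x y : V} {p : ℝ}

theorem W1_mu_of_closedNbhd_eq (hG : G.Connected) (h : closedNbhd G x = closedNbhd G y)
    (hp₁ : p ≤ 1) (hp : (1 - p) / deg G x ≤ p) :
    W1 G (mu G p x) (mu G p y) = G.dist x y * (p - (1 - p) / deg G x) := by
  have hq : 0 ≤ (1 - p) / deg G x := div_nonneg (sub_nonneg.2 hp₁) (Nat.cast_nonneg _)
  have hle := mu_le_one (G := G) (hq.trans hp) hp₁ x
  rw [mu_eq_indicator_add_single] at hle
  rw [mu_eq_indicator_add_single G p x, mu_eq_indicator_add_single G p y, ← h,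
    ← deg_eq_of_closedNbhd_eq h]
  exact W1_add_single hG (Set.indicator_nonneg fun _ _ => hq) (sub_nonneg.2 hp) hle y

theorem kappa_of_closedNbhd_eq (hG : G.Connected) (hxy : x ≠ y)
    (h : closedNbhd G x = closedNbhd G y) (hp₁ : p ≤ 1) (hp : (1 - p) / deg G x ≤ p) :
    kappa G p x y = (deg G x + 1) / deg G x * (1 - p) := by
  have hadj := adj_of_closedNbhd_eq hxy h
  have hdeg : (deg G x : ℝ) ≠ 0 := by exact_mod_cast (deg_pos_of_adj hadj).ne'
  rw [kappa, W1_mu_of_closedNbhd_eq hG h hp₁ hp, SimpleGraph.dist_eq_one_iff_adj.2 hadj]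
  field_simp
  push_cast
  ring

theorem kappaLLY_eq_of_eventually_kappa_eq {k : ℝ}
    (h : ∀ᶠ p in 𝓝[<] 1, kappa G p x y = k * (1 - p)) :
    kappaLLY G x y = k := by
  refine Filter.Tendsto.limUnder_eq (tendsto_const_nhds.congr' ?_)
  filter_upwards [h, self_mem_nhdsWithin] with p hp hp₁
  rw [hp, mul_div_cancel_right₀ _ (sub_ne_zero.2 (Set.mem_Iio.1 hp₁).ne')]

theorem stmt3_general (hG : G.Connected) (hxy : x ≠ y) (h : closedNbhd G x = closedNbhd G y) :
    kappaLLY G x y = (deg G x + 1) / deg G x ∧ (1 : ℝ) < (deg G x + 1) / deg G x := by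
  have hdeg : (1 : ℝ) ≤ deg G x := by exact_mod_cast deg_pos_of_adj (adj_of_closedNbhd_eq hxy h)
  refine ⟨kappaLLY_eq_of_eventually_kappa_eq ?_, (one_lt_div (by linarith)).2 (by linarith)⟩
  filter_upwards [Ioo_mem_nhdsLT (show (1 / 2 : ℝ) < 1 by norm_num)] with p hp
  refine kappa_of_closedNbhd_eq hG hxy h hp.2.le ?_
  calc (1 - p) / deg G x ≤ 1 - p := div_le_self (sub_nonneg.2 hp.2.le) hdeg
    _ ≤ p := by linarith [hp.1]

theorem kappaLLY_of_isUniversal (hxy : x ≠ y) (hx : G.IsUniversal x) (hy : G.IsUniversal y) :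
    kappaLLY G x y = (Fintype.card V : ℝ) / ((Fintype.card V : ℝ) - 1) ∧
      (1 : ℝ) < (Fintype.card V : ℝ) / ((Fintype.card V : ℝ) - 1) := by
  simpa only [cast_deg_of_isUniversal hx, sub_add_cancel] using
    stmt3_general (.of_isUniversal hx) hxy
      ((closedNbhd_eq_univ hx).trans (closedNbhd_eq_univ hy).symm)

end Curvature

theorem isUniversal_Gab {a b : ℕ} {v : Fin (2 * a + b)} (hv : 2 * a ≤ v) :
    (Gab a b).IsUniversal v :=
  fun _ hz => ⟨hz, fun hpair => hpair.1.not_ge hv⟩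

/-- In `G(a,b)` with `a ≥ 1`, `b ≥ 2`, every edge `v_i ∼ v_j` has
`κ_LLY = (2a+b)/(2a+b-1) > 1`. -/
theorem stmt3 (a b : ℕ) (ha : 1 ≤ a) (hb : 2 ≤ b) (i j : ℕ)
    (hi : 1 ≤ i) (hij : i < j) (hj : j ≤ b) :
    kappaLLY (Gab a b) ⟨2*a+i-1, by omega⟩ ⟨2*a+j-1, by omega⟩
        = (2*a+b : ℝ) / ((2*a+b : ℝ) - 1) ∧
      (1 : ℝ) < (2*a+b : ℝ) / ((2*a+b : ℝ) - 1) := by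
  simpa using kappaLLY_of_isUniversal (G := Gab a b) (Fin.ne_of_val_ne (by dsimp; omega))
    (isUniversal_Gab (by dsimp; omega)) (isUniversal_Gab (by dsimp; omega))
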